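/- arXiv:math/9403216 — 2 statements merged into one kernel-verified Lean document; each statement's English description precedes it below -/
import Mathlib

section
/- (Three-term transformation for ₂φ₁; Mimachi's relation) Let 0<q<1 and a,b,c,z∈ℂ with a,b≠0, |qc/(ab)|<|z|<1, a/b ∉ {q^k : k∈ℤ}, and such that the sets {q^n : n∈ℤ_{≥0}} and {a^{-1}q^{-n}, b^{-1}q^{-n} : n∈ℤ_{≥0}} are disjoint, and the lower parameters c, qa/b, qb/a avoid {1,q^{-1},q^{-2},…}. Then (z, q z^{-1};q)_∞ · ₂φ₁(a,b;c;q,z) = (az, q a^{-1}z^{-1};q)_∞ · ((c/a, b;q)_∞/((c, b/a;q)_∞)) · ₂φ₁(a, qa/c; qa/b; q, qc/(abz)) + (bz, q b^{-1}z^{-1};q)_∞ · ((c/b, a;q)_∞/((c, a/b;q)_∞)) · ₂φ₁(b, qb/c; qb/a; q, qc/(abz)). -/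
/-!
The transformation is the statement that the residues of
`(cx, qx/z, z/x;q)_∞ / ((ax, bx, 1/x;q)_∞ x)` add up to zero: the poles at `q^k` produce the series
on the left-hand side, and the poles at `1/(a q^k)` and `1/(b q^k)` produce the two series on the
right-hand side.

To avoid contour integrals every infinite product is truncated to its first `n` factors. The
function becomes rational with simple poles, and its residues are summed by Lagrange interpolation
(`sum_residues`). The residues at the nonzero poles are computed in `residue_pow` and
`residue_inv`; the pole at `0` and the point at infinity contribute `z^n` and `(qc/(abz))^n`, giving
the finite identity `truncated`. Since `|z| < 1` and `|qc/(abz)| < 1`, these two contributions vanish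
as `n → ∞`. Each remaining residue is a term of the corresponding `₂φ₁` times a uniformly bounded,
convergent factor, so dominated convergence (`tannery_shifted`) gives the result.
-/

noncomputable section

/-- The finite q-shifted factorial `(a;q)_k`. -/
def qp (q a : ℂ) (k : ℕ) : ℂ := ∏ j ∈ Finset.range k, (1 - a * q ^ j)

/-- The infinite q-shifted factorial `(a;q)_∞`. -/
def qpi (q a : ℂ) : ℂ := ∏' j : ℕ, (1 - a * q ^ j)

/-- The basic hypergeometric series `₂φ₁(a,b;c;q,z)`. -/
def phi21 (q a b c z : ℂ) : ℂ :=
  ∑' k : ℕ, qp q a k * qp q b k / (qp q c k * qp q q k) * z ^ k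

open Filter Topology Finset Polynomial

/-! ### Partial fractions -/

/-- Splits a sum of residues over a disjoint union of two sets of poles; the weight `g` carries the
factors coming from poles split off earlier. -/
lemma sum_residues_union (P : ℂ[X]) (S T : Finset ℂ) (h : Disjoint S T) (g : ℂ → ℂ) :
    ∑ x ∈ S ∪ T, P.eval x / (g x * ∏ y ∈ (S ∪ T).erase x, (x - y)) =
      ∑ x ∈ S, P.eval x / ((g x * ∏ y ∈ T, (x - y)) * ∏ y ∈ S.erase x, (x - y)) +
      ∑ x ∈ T, P.eval x / ((g x * ∏ y ∈ S, (x - y)) * ∏ y ∈ T.erase x, (x - y)) := by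
  rw [sum_union h]
  congr 1
  · refine sum_congr rfl fun x hx => ?_
    have hxT : x ∉ T := Finset.disjoint_left.mp h hx
    rw [erase_union_distrib, erase_eq_of_notMem hxT,
      prod_union (h.mono_left (erase_subset _ _))]
    ring_nf
  · refine sum_congr rfl fun x hx => ?_
    have hxS : x ∉ S := Finset.disjoint_right.mp h hx
    rw [erase_union_distrib, erase_eq_of_notMem hxS,
      prod_union (h.mono_right (erase_subset _ _))]
    ring_nf

lemma prod_erase_image (u : ℕ → ℂ) (hu : Function.Injective u) (n k : ℕ) (x : ℂ) :
    ∏ y ∈ ((range n).image u).erase (u k), (x - y) = ∏ j ∈ (range n).erase k, (x - u j) := by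
  rw [← image_erase hu, prod_image (fun _ _ _ _ h => hu h)]

lemma disjoint_image {u v : ℕ → ℂ} (h : ∀ i j, u i ≠ v j) (n : ℕ) :
    Disjoint ((range n).image u) ((range n).image v) := by
  rw [Finset.disjoint_left]
  intro x hx hx'
  obtain ⟨i, -, rfl⟩ := mem_image.mp hx
  obtain ⟨j, -, hj⟩ := mem_image.mp hx'
  exact h i j hj.symm

/-- The residues of `P(x) / (x ∏ (x - u j) ∏ (x - v j) ∏ (x - w j))` at its finite simple poles add
up to the coefficient of `1 / x` at infinity. -/
lemma sum_residues (P : ℂ[X]) (n : ℕ) (hP : P.natDegree ≤ n * 3) (u v w : ℕ → ℂ)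
    (hu : Function.Injective u) (hv : Function.Injective v) (hw : Function.Injective w)
    (hu0 : ∀ i, u i ≠ 0) (hv0 : ∀ i, v i ≠ 0) (hw0 : ∀ i, w i ≠ 0)
    (huv : ∀ i j, u i ≠ v j) (huw : ∀ i j, u i ≠ w j) (hvw : ∀ i j, v i ≠ w j) :
    P.coeff (n * 3) =
      P.eval 0 / ∏ j ∈ range n, ((-u j) * (-v j) * (-w j)) +
      ∑ k ∈ range n, P.eval (u k) / (u k * (∏ j ∈ (range n).erase k, (u k - u j)) *
        (∏ j ∈ range n, (u k - v j)) * ∏ j ∈ range n, (u k - w j)) +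
      ∑ k ∈ range n, P.eval (v k) / (v k * (∏ j ∈ (range n).erase k, (v k - v j)) *
        (∏ j ∈ range n, (v k - u j)) * ∏ j ∈ range n, (v k - w j)) +
      ∑ k ∈ range n, P.eval (w k) / (w k * (∏ j ∈ (range n).erase k, (w k - w j)) *
        (∏ j ∈ range n, (w k - u j)) * ∏ j ∈ range n, (w k - v j)) := by
  have iu : Set.InjOn u (range n) := hu.injOn
  have iv : Set.InjOn v (range n) := hv.injOn
  have iw : Set.InjOn w (range n) := hw.injOn
  set U := (range n).image u with hU
  set V := (range n).image v with hV
  set W := (range n).image w with hW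
  have dUV : Disjoint U V := disjoint_image huv n
  have dUW : Disjoint U W := disjoint_image huw n
  have dVW : Disjoint V W := disjoint_image hvw n
  have d0 : Disjoint ({0} : Finset ℂ) (U ∪ (V ∪ W)) := by
    simp [hU, hV, hW, hu0, hv0, hw0]
  have d1 : Disjoint U (V ∪ W) := by simp [dUV, dUW]
  have hcard : #({0} ∪ (U ∪ (V ∪ W))) = n * 3 + 1 := by
    rw [card_union_of_disjoint d0, card_union_of_disjoint d1, card_union_of_disjoint dVW,
      hU, hV, hW, card_image_of_injOn iu, card_image_of_injOn iv, card_image_of_injOn iw]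
    simp; ring
  have key := Lagrange.coeff_eq_sum (s := {0} ∪ (U ∪ (V ∪ W))) (v := id) (P := P)
    Function.injective_id.injOn (by
      rw [hcard]
      exact lt_of_le_of_lt degree_le_natDegree (by exact_mod_cast Nat.lt_succ_of_le hP))
  have e := sum_residues_union P {0} (U ∪ (V ∪ W)) d0 (fun _ => 1)
  simp only [one_mul] at e
  rw [hcard] at key
  simp only [id, Nat.add_sub_cancel] at key
  rw [key, e, sum_residues_union P U (V ∪ W) d1, sum_residues_union P V W dVW]
  simp only [sum_singleton, erase_singleton, prod_empty, mul_one, prod_singleton, sub_zero]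
  rw [prod_union d1, prod_union dVW]
  have su : ∀ f : ℂ → ℂ, ∑ x ∈ U, f x = ∑ k ∈ range n, f (u k) := fun f => sum_image iu
  have sv : ∀ f : ℂ → ℂ, ∑ x ∈ V, f x = ∑ k ∈ range n, f (v k) := fun f => sum_image iv
  have sw : ∀ f : ℂ → ℂ, ∑ x ∈ W, f x = ∑ k ∈ range n, f (w k) := fun f => sum_image iw
  have pu : ∀ f : ℂ → ℂ, ∏ x ∈ U, f x = ∏ k ∈ range n, f (u k) := fun f => prod_image iu
  have pv : ∀ f : ℂ → ℂ, ∏ x ∈ V, f x = ∏ k ∈ range n, f (v k) := fun f => prod_image iv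
  have pw : ∀ f : ℂ → ℂ, ∏ x ∈ W, f x = ∏ k ∈ range n, f (w k) := fun f => prod_image iw
  rw [su, sv, sw, pu, pv, pw, add_assoc, add_assoc]
  congr 1
  · simp only [prod_mul_distrib, zero_sub, mul_assoc]
  congr 1
  · refine sum_congr rfl fun k _ => ?_
    rw [prod_union dVW, hU, prod_erase_image u hu, pv, pw]
    ring_nf
  congr 1
  · refine sum_congr rfl fun k _ => ?_
    rw [hV, prod_erase_image v hv, pu, pw]
    ring_nf
  · refine sum_congr rfl fun k _ => ?_
    rw [hW, prod_erase_image w hw, pu, pv]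
    ring_nf

/-! ### Finite q-shifted factorials -/

lemma qp_mul_pow (q y : ℂ) (n k : ℕ) : qp q (y * q ^ k) n * qp q y k = qp q y (n + k) := by
  unfold qp
  rw [add_comm n k, prod_range_add, mul_comm]
  congr 1
  exact prod_congr rfl fun j _ => by ring

/-- Reversing the product `(y q^{-k};q)_k`. -/
lemma qp_shift_head (q y : ℂ) (hq : q ≠ 0) (hy : y ≠ 0) (k : ℕ) :
    ∏ j ∈ range k, (1 - y / q ^ k * q ^ j) =
      (-y) ^ k * (∏ j ∈ range k, (q ^ (j + 1))⁻¹) * qp q (q / y) k := by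
  unfold qp
  have hp : (-y) ^ k = ∏ _j ∈ range k, (-y) := by simp
  rw [← prod_range_reflect, hp, ← prod_mul_distrib, ← prod_mul_distrib]
  refine prod_congr rfl fun j hj => ?_
  have hj' := mem_range.mp hj
  have : q ^ k = q ^ (k - 1 - j) * q ^ (j + 1) := by rw [← pow_add]; congr 1; omega
  rw [this]
  field_simp
  ring

lemma qp_div_pow (q y : ℂ) (hq : q ≠ 0) (hy : y ≠ 0) (n k : ℕ) (hk : k ≤ n) :
    qp q (y / q ^ k) n =
      (-y) ^ k * (∏ j ∈ range k, (q ^ (j + 1))⁻¹) * qp q (q / y) k * qp q y (n - k) := by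
  obtain ⟨m, rfl⟩ := Nat.exists_eq_add_of_le hk
  rw [← qp_shift_head q y hq hy, Nat.add_sub_cancel_left]
  unfold qp
  rw [prod_range_add]
  congr 1
  refine prod_congr rfl fun j _ => ?_
  rw [pow_add]
  field_simp

/-- The analogue of `qp_div_pow` for `y = 1`, with the vanishing factor removed. -/
lemma prod_erase_one_sub (q : ℂ) (hq : q ≠ 0) (n k : ℕ) (hk : k < n) :
    ∏ j ∈ (range n).erase k, (1 - q ^ j / q ^ k) =
      (-1) ^ k * (∏ j ∈ range k, (q ^ (j + 1))⁻¹) * qp q q k * qp q q (n - 1 - k) := by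
  obtain ⟨m, rfl⟩ := Nat.exists_eq_add_of_lt hk
  have h1 := qp_shift_head q 1 hq one_ne_zero k
  rw [div_one] at h1
  rw [← h1]
  have : ∏ j ∈ (range (k + m + 1)).erase k, (1 - q ^ j / q ^ k) =
      ∏ j ∈ range (k + 1 + m), if j = k then 1 else (1 - q ^ j / q ^ k) := by
    rw [add_right_comm, ← prod_erase (range (k + 1 + m)) (a := k) (by simp)]
    refine prod_congr rfl fun j hj => ?_
    rw [if_neg (ne_of_mem_erase hj)]
  rw [this, prod_range_add, prod_range_succ]
  simp only [if_true, mul_one]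
  unfold qp
  rw [show k + m + 1 - 1 - k = m by omega]
  congr 1
  · refine prod_congr rfl fun j hj => ?_
    rw [if_neg (mem_range.mp hj).ne]; ring
  · refine prod_congr rfl fun j _ => ?_
    rw [if_neg (by omega), pow_add, pow_succ]
    field_simp

/-! ### Convergence -/

lemma summable_mul_pow {q : ℂ} (hq : ‖q‖ < 1) (x : ℂ) : Summable fun j : ℕ => ‖-(x * q ^ j)‖ := by
  simp only [norm_neg, norm_mul, norm_pow]
  exact (summable_geometric_of_lt_one (norm_nonneg _) hq).mul_left _

lemma tendsto_qp {q : ℂ} (hq : ‖q‖ < 1) (x : ℂ) :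
    Tendsto (qp q x) atTop (𝓝 (qpi q x)) := by
  have h := multipliable_one_add_of_summable (summable_mul_pow hq x)
  simp only [← sub_eq_add_neg] at h
  exact h.tendsto_prod_tprod_nat

lemma qpi_ne_zero {q : ℂ} (hq : ‖q‖ < 1) {x : ℂ} (hx : ∀ n : ℕ, x * q ^ n ≠ 1) :
    qpi q x ≠ 0 := by
  have h := tprod_one_add_ne_zero_of_summable (f := fun j : ℕ => -(x * q ^ j))
    (fun i => by rw [← sub_eq_add_neg]; exact sub_ne_zero.mpr (hx i).symm) (summable_mul_pow hq x)
  simp only [← sub_eq_add_neg] at h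
  exact h

lemma qp_ne_zero {q x : ℂ} (hx : ∀ n : ℕ, x * q ^ n ≠ 1) (n : ℕ) : qp q x n ≠ 0 :=
  prod_ne_zero_iff.mpr fun i _ => sub_ne_zero.mpr (hx i).symm

lemma bounded_of_tendsto {f : ℕ → ℂ} {l : ℂ} (hf : Tendsto f atTop (𝓝 l)) :
    ∃ C, 0 ≤ C ∧ ∀ n, ‖f n‖ ≤ C := by
  obtain ⟨C, hC⟩ := hf.norm.bddAbove_range
  exact ⟨C, (norm_nonneg _).trans (hC ⟨0, rfl⟩), fun n => hC ⟨n, rfl⟩⟩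

lemma summable_phi21 {q : ℂ} (hq : ‖q‖ < 1) (a b : ℂ) {c z : ℂ} (hz : ‖z‖ < 1)
    (hc : ∀ n : ℕ, c * q ^ n ≠ 1) (hqq : ∀ n : ℕ, q * q ^ n ≠ 1) :
    Summable fun k : ℕ => ‖qp q a k * qp q b k / (qp q c k * qp q q k) * z ^ k‖ := by
  have h := ((tendsto_qp hq a).mul (tendsto_qp hq b)).div ((tendsto_qp hq c).mul (tendsto_qp hq q))
    (mul_ne_zero (qpi_ne_zero hq hc) (qpi_ne_zero hq hqq))
  obtain ⟨C, hC0, hC⟩ := bounded_of_tendsto h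
  refine Summable.of_nonneg_of_le (fun _ => norm_nonneg _) (fun k => ?_)
    ((summable_geometric_of_lt_one (norm_nonneg z) hz).mul_left C)
  rw [norm_mul, norm_pow]
  exact mul_le_mul_of_nonneg_right (hC k) (by positivity)

/-- Tannery's theorem for truncated sums. -/
lemma tannery {t : ℕ → ℂ} (ht : Summable fun k => ‖t k‖) {U : ℕ → ℕ → ℂ} {L : ℂ} {C : ℝ}
    (hU : ∀ n k, ‖U n k‖ ≤ C) (hL : ∀ k, Tendsto (fun n => U n k) atTop (𝓝 L)) :
    Tendsto (fun n => ∑ k ∈ range n, t k * U n k) atTop (𝓝 ((∑' k, t k) * L)) := by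
  rw [← tsum_mul_right]
  have e : ∀ n, ∑ k ∈ range n, t k * U n k = ∑' k, if k < n then t k * U n k else 0 := fun n => by
    rw [tsum_eq_sum (s := range n) (fun k hk => if_neg (by simpa using hk))]
    exact sum_congr rfl fun k hk => (if_pos (mem_range.mp hk)).symm
  simp only [e]
  refine tendsto_tsum_of_dominated_convergence (bound := fun k => ‖t k‖ * C) (ht.mul_right C)
    (fun k => ?_) (Eventually.of_forall fun n k => ?_)
  · refine ((hL k).const_mul (t k)).congr' ?_
    filter_upwards [eventually_gt_atTop k] with n hn
    rw [if_pos hn]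
  · have hC : 0 ≤ C := (norm_nonneg _).trans (hU 0 0)
    split_ifs
    · rw [norm_mul]; exact mul_le_mul_of_nonneg_left (hU n k) (norm_nonneg _)
    · rw [norm_zero]; positivity

/-- Tannery's theorem for the shape in which the truncated residue sums occur. -/
lemma tannery_shifted {t : ℕ → ℂ} (ht : Summable fun k => ‖t k‖) {A B D : ℕ → ℂ} {α β δ : ℂ}
    (hA : Tendsto A atTop (𝓝 α)) (hB : Tendsto B atTop (𝓝 β)) (hD : Tendsto D atTop (𝓝 δ)) :
    Tendsto (fun n => ∑ k ∈ range n, t k * (A (n + k) * B (n - k) * D (n - 1 - k))) atTop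
      (𝓝 ((∑' k, t k) * (α * β * δ))) := by
  obtain ⟨CA, hA0, hCA⟩ := bounded_of_tendsto hA
  obtain ⟨CB, hB0, hCB⟩ := bounded_of_tendsto hB
  obtain ⟨CD, hD0, hCD⟩ := bounded_of_tendsto hD
  refine tannery ht (C := CA * CB * CD) (fun n k => ?_) (fun k => ?_)
  · rw [norm_mul, norm_mul]
    gcongr
    exacts [hCA _, hCB _, hCD _]
  · refine ((hA.comp (tendsto_add_atTop_nat k)).mul (hB.comp (tendsto_sub_atTop_nat k))).mul
      (hD.comp ?_)
    exact (tendsto_sub_atTop_nat k).comp (tendsto_sub_atTop_nat 1)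

/-! ### The truncated transformation -/

/-- The numerator `∏_{j<n} (1 - c q^j x)(1 - q^{j+1} x / z)(x - z q^j)` of the rational function
whose residues give the transformation. -/
def numer (q c z : ℂ) (n : ℕ) : ℂ[X] :=
  ∏ j ∈ range n, ((1 - C (c * q ^ j) * X) * (1 - C (q / z * q ^ j) * X) * (X - C (z * q ^ j)))

lemma natDegree_numer_factor (r s t : ℂ) :
    ((1 - C r * X) * (1 - C s * X) * (X - C t) : ℂ[X]).natDegree ≤ 3 := by
  compute_degree

lemma coeff_numer_factor (r s t : ℂ) :
    ((1 - C r * X) * (1 - C s * X) * (X - C t) : ℂ[X]).coeff 3 = r * s := by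
  have : ((1 - C r * X) * (1 - C s * X) * (X - C t) : ℂ[X]) =
      C (r * s) * X ^ 3 + C (-(r + s) - r * s * t) * X ^ 2 + C (1 + (r + s) * t) * X ^ 1 + C (-t) := by
    simp only [map_mul, map_add, map_sub, map_neg, map_one]
    ring
  rw [this]
  simp only [coeff_add, coeff_C_mul, coeff_X_pow, coeff_C]
  norm_num

lemma natDegree_numer (q c z : ℂ) (n : ℕ) : (numer q c z n).natDegree ≤ n * 3 := by
  refine (natDegree_prod_le _ _).trans ?_
  refine (sum_le_card_nsmul _ _ 3 fun j _ => natDegree_numer_factor _ _ _).trans ?_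
  simp

lemma coeff_numer (q c z : ℂ) (n : ℕ) :
    (numer q c z n).coeff (n * 3) = ∏ j ∈ range n, (c * q ^ j * (q / z * q ^ j)) := by
  have h := coeff_prod_of_natDegree_le (s := range n) (fun j : ℕ =>
    ((1 - C (c * q ^ j) * X) * (1 - C (q / z * q ^ j) * X) * (X - C (z * q ^ j)) : ℂ[X])) 3
    (fun j _ => natDegree_numer_factor _ _ _)
  rw [card_range] at h
  unfold numer
  rw [h]
  exact prod_congr rfl fun j _ => coeff_numer_factor _ _ _

lemma prod_sub_mul_pow (q z x : ℂ) (hx : x ≠ 0) (n : ℕ) :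
    ∏ j ∈ range n, (x - z * q ^ j) = x ^ n * qp q (z / x) n := by
  have hp : x ^ n = ∏ _j ∈ range n, x := by simp
  unfold qp
  rw [hp, ← prod_mul_distrib]
  exact prod_congr rfl fun j _ => by field_simp

lemma eval_numer (q c z x : ℂ) (hx : x ≠ 0) (n : ℕ) :
    (numer q c z n).eval x =
      qp q (c * x) n * qp q (q / z * x) n * (x ^ n * qp q (z / x) n) := by
  unfold numer
  rw [eval_prod, ← prod_sub_mul_pow q z x hx]
  unfold qp
  rw [← prod_mul_distrib, ← prod_mul_distrib]
  refine prod_congr rfl fun j _ => ?_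
  simp only [eval_mul, eval_sub, eval_one, eval_C, eval_X]
  ring

/-- Passage between the monic factors `x - (a q^j)⁻¹` and the factors `1 - a q^j x`. -/
lemma prod_sub_inv (q a x : ℂ) (hq : q ≠ 0) (ha : a ≠ 0) (n : ℕ) :
    (∏ j ∈ range n, (x - (a * q ^ j)⁻¹)) * ∏ j ∈ range n, (-(a * q ^ j)) = qp q (a * x) n := by
  unfold qp
  rw [← prod_mul_distrib]
  refine prod_congr rfl fun j _ => ?_
  field_simp
  ring

/-- The residue at `q ^ k` is, up to the constant turning monic factors into q-shifted factorials,
the `k`-th term of `₂φ₁(a,b;c;q,z)` times a truncation of `(z,q/z,c;q)_∞ / (a,b,q;q)_∞`. -/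
lemma residue_pow (q a b c z : ℂ) (hq : q ≠ 0) (ha : a ≠ 0) (hb : b ≠ 0) (hz : z ≠ 0)
    (ha1 : ∀ n : ℕ, a * q ^ n ≠ 1) (hb1 : ∀ n : ℕ, b * q ^ n ≠ 1) (hc : ∀ n : ℕ, c * q ^ n ≠ 1)
    (n k : ℕ) (hk : k < n) :
    (numer q c z n).eval (q ^ k) / (q ^ k * (∏ j ∈ (range n).erase k, (q ^ k - q ^ j)) *
        (∏ j ∈ range n, (q ^ k - (a * q ^ j)⁻¹)) * ∏ j ∈ range n, (q ^ k - (b * q ^ j)⁻¹)) =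
      ((∏ j ∈ range n, (-(a * q ^ j))) * ∏ j ∈ range n, (-(b * q ^ j))) *
      (qp q a k * qp q b k / (qp q c k * qp q q k) * z ^ k *
        ((qp q (q / z) (n + k) * qp q c (n + k) / (qp q a (n + k) * qp q b (n + k))) *
          qp q z (n - k) * (qp q q (n - 1 - k))⁻¹)) := by
  have hx : q ^ k ≠ 0 := pow_ne_zero _ hq
  have hKa : ∏ j ∈ range n, (-(a * q ^ j)) ≠ 0 := prod_ne_zero_iff.mpr fun j _ => by simp [ha, hq]
  have hKb : ∏ j ∈ range n, (-(b * q ^ j)) ≠ 0 := prod_ne_zero_iff.mpr fun j _ => by simp [hb, hq]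
  have hG : ∏ j ∈ range k, (q ^ (j + 1))⁻¹ ≠ 0 := prod_ne_zero_iff.mpr fun j _ => by simp [hq]
  have h0 : q ^ k * ∏ j ∈ (range n).erase k, (q ^ k - q ^ j) =
      (q ^ k) ^ n * ((-1) ^ k * (∏ j ∈ range k, (q ^ (j + 1))⁻¹) * qp q q k *
        qp q q (n - 1 - k)) := by
    rw [← prod_erase_one_sub q hq n k hk]
    have hp : (q ^ k) ^ n = q ^ k * ∏ _j ∈ (range n).erase k, q ^ k := by
      rw [prod_const, card_erase_of_mem (mem_range.mpr hk), card_range, ← pow_succ']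
      congr 1; omega
    rw [hp, mul_assoc, ← prod_mul_distrib]
    congr 1
    exact prod_congr rfl fun j _ => by field_simp
  rw [h0, eq_div_of_mul_eq hKa (prod_sub_inv q a (q ^ k) hq ha n),
    eq_div_of_mul_eq hKb (prod_sub_inv q b (q ^ k) hq hb n), eval_numer _ _ _ _ hx,
    qp_div_pow q z hq hz n k hk.le,
    eq_div_of_mul_eq (qp_ne_zero hc k) (qp_mul_pow q c n k),
    eq_div_of_mul_eq (qp_ne_zero ha1 k) (qp_mul_pow q a n k),
    eq_div_of_mul_eq (qp_ne_zero hb1 k) (qp_mul_pow q b n k),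
    ← qp_mul_pow q (q / z) n k, neg_pow]
  have hs : ((-1 : ℂ)) ^ k ≠ 0 := by simp
  have hqk : (q ^ k) ^ n ≠ 0 := pow_ne_zero _ hx
  generalize (q ^ k) ^ n = Z at *
  generalize ((-1 : ℂ)) ^ k = e at *
  generalize ∏ j ∈ range k, (q ^ (j + 1))⁻¹ = G at *
  have h1 := qp_ne_zero ha1 k
  have h2 := qp_ne_zero hb1 k
  have h3 := qp_ne_zero hc k
  have h4 := qp_ne_zero ha1 (n + k)
  have h5 := qp_ne_zero hb1 (n + k)
  generalize ∏ j ∈ range n, (-(a * q ^ j)) = Ka at *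
  generalize ∏ j ∈ range n, (-(b * q ^ j)) = Kb at *
  simp only [div_eq_mul_inv, mul_inv, inv_inv]
  field_simp

set_option maxHeartbeats 1000000 in
/-- The residue at `1 / (a q^k)` is, up to the same constant and a sign, the `k`-th term of
`₂φ₁(a,qa/c;qa/b;q,qc/(abz))` times a truncation of
`(az,q/(az),c/a;q)_∞ / (a,b/a,q;q)_∞`. -/
lemma residue_inv (q a b c z : ℂ) (hq : q ≠ 0) (ha : a ≠ 0) (hb : b ≠ 0) (hc0 : c ≠ 0)
    (hz : z ≠ 0) (ha1 : ∀ n : ℕ, a * q ^ n ≠ 1)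
    (n k : ℕ) (hk : k < n) :
    (numer q c z n).eval ((a * q ^ k)⁻¹) /
      ((a * q ^ k)⁻¹ * (∏ j ∈ (range n).erase k, ((a * q ^ k)⁻¹ - (a * q ^ j)⁻¹)) *
        (∏ j ∈ range n, ((a * q ^ k)⁻¹ - q ^ j)) *
        ∏ j ∈ range n, ((a * q ^ k)⁻¹ - (b * q ^ j)⁻¹)) =
      -((∏ j ∈ range n, (-(a * q ^ j))) * ∏ j ∈ range n, (-(b * q ^ j))) *
      (qp q a k * qp q (q * a / c) k / (qp q (q * a / b) k * qp q q k) *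
          (q * c / (a * b * z)) ^ k *
        ((qp q (a * z) (n + k) / qp q a (n + k)) *
          (qp q (c / a) (n - k) * qp q (q / (a * z)) (n - k) / qp q (b / a) (n - k)) *
          (qp q q (n - 1 - k))⁻¹)) := by
  have hx : (a * q ^ k)⁻¹ ≠ 0 := by simp [ha, hq]
  have hKa : ∏ j ∈ range n, (-(a * q ^ j)) ≠ 0 := prod_ne_zero_iff.mpr fun j _ => by simp [ha, hq]
  have hKb : ∏ j ∈ range n, (-(b * q ^ j)) ≠ 0 := prod_ne_zero_iff.mpr fun j _ => by simp [hb, hq]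
  have hG : ∏ j ∈ range k, (q ^ (j + 1))⁻¹ ≠ 0 := prod_ne_zero_iff.mpr fun j _ => by simp [hq]
  have h0 : ((a * q ^ k)⁻¹ * ∏ j ∈ (range n).erase k, ((a * q ^ k)⁻¹ - (a * q ^ j)⁻¹)) *
      (∏ j ∈ range n, (-(a * q ^ j))) =
      -((-1) ^ k * (∏ j ∈ range k, (q ^ (j + 1))⁻¹) * qp q q k * qp q q (n - 1 - k)) := by
    rw [← prod_erase_one_sub q hq n k hk, ← mul_prod_erase (range n) _ (mem_range.mpr hk)]
    have : ∏ j ∈ (range n).erase k, (1 - q ^ j / q ^ k) =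
        (∏ j ∈ (range n).erase k, ((a * q ^ k)⁻¹ - (a * q ^ j)⁻¹)) *
          ∏ j ∈ (range n).erase k, (-(a * q ^ j)) := by
      rw [← prod_mul_distrib]
      refine prod_congr rfl fun j _ => ?_
      field_simp
      ring
    rw [this]
    field_simp
  have h1 : ∏ j ∈ range n, ((a * q ^ k)⁻¹ - q ^ j) =
      ((a * q ^ k)⁻¹) ^ n * (qp q a (n + k) / qp q a k) := by
    have := prod_sub_mul_pow q 1 _ hx n
    simp only [one_mul, one_div, inv_inv] at this
    rw [this, eq_div_of_mul_eq (qp_ne_zero ha1 k) (qp_mul_pow q a n k)]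
  rw [eq_div_of_mul_eq hKa h0, h1,
    eq_div_of_mul_eq hKb (prod_sub_inv q b _ hq hb n), eval_numer _ _ _ _ hx,
    show b * (a * q ^ k)⁻¹ = b / a / q ^ k by field_simp,
    show c * (a * q ^ k)⁻¹ = c / a / q ^ k by field_simp,
    show q / z * (a * q ^ k)⁻¹ = q / (a * z) / q ^ k by field_simp,
    show z / (a * q ^ k)⁻¹ = a * z * q ^ k by field_simp,
    qp_div_pow q (b / a) hq (by simp [ha, hb]) n k hk.le,
    qp_div_pow q (c / a) hq (by simp [ha, hc0]) n k hk.le,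
    qp_div_pow q (q / (a * z)) hq (by simp [ha, hz, hq]) n k hk.le,
    show q / (b / a) = q * a / b by field_simp,
    show q / (c / a) = q * a / c by field_simp,
    show q / (q / (a * z)) = a * z by field_simp,
    ← qp_mul_pow q (a * z) n k]
  -- The four powers produced by reversing the products `(y q^{-k};q)_k` combine to the argument.
  have hw : (q * c / (a * b * z)) ^ k * (-(b / a)) ^ k * (-1) ^ k =
      (-(c / a)) ^ k * (-(q / (a * z))) ^ k := by
    simp only [← mul_pow]
    congr 1
    field_simp
  have hs : ((-1 : ℂ)) ^ k ≠ 0 := by simp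
  have hba : (-(b / a)) ^ k ≠ 0 := pow_ne_zero _ (by simp [ha, hb])
  have hXn : ((a * q ^ k)⁻¹) ^ n ≠ 0 := pow_ne_zero _ hx
  generalize ((a * q ^ k)⁻¹) ^ n = Z at *
  generalize (-(b / a)) ^ k = B at *
  generalize (-(c / a)) ^ k = C' at *
  generalize (-(q / (a * z))) ^ k = D at *
  generalize (q * c / (a * b * z)) ^ k = w at *
  generalize ((-1 : ℂ)) ^ k = e at *
  generalize ∏ j ∈ range k, (q ^ (j + 1))⁻¹ = G at *
  have hw' : w = C' * D / (B * e) := eq_div_of_mul_eq (mul_ne_zero hba hs) (by rw [← hw]; ring)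
  have h4 := qp_ne_zero ha1 k
  have h5 := qp_ne_zero ha1 (n + k)
  generalize ∏ j ∈ range n, (-(a * q ^ j)) = Ka at *
  generalize ∏ j ∈ range n, (-(b * q ^ j)) = Kb at *
  rw [hw']
  clear hw hw' h0 h1 hx hk
  simp only [div_eq_mul_inv, mul_inv, inv_inv, inv_neg]
  field_simp

/-- The sum of all residues of `numer / (x (1/x;q)_n x^n (ax;q)_n (bx;q)_n)`. The pole at `0`
contributes `z ^ n` and the point at infinity contributes `(q c / (a b z)) ^ n`. -/
lemma truncated (q a b c z : ℂ) (hq : q ≠ 0) (hinj : Function.Injective fun k : ℕ => q ^ k)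
    (ha : a ≠ 0) (hb : b ≠ 0) (hc0 : c ≠ 0) (hz : z ≠ 0)
    (ha1 : ∀ n : ℕ, a * q ^ n ≠ 1) (hb1 : ∀ n : ℕ, b * q ^ n ≠ 1) (hc : ∀ n : ℕ, c * q ^ n ≠ 1)
    (hab : ∀ i j : ℕ, a * q ^ i ≠ b * q ^ j) (n : ℕ) :
    ∑ k ∈ range n, (qp q a k * qp q b k / (qp q c k * qp q q k) * z ^ k *
        ((qp q (q / z) (n + k) * qp q c (n + k) / (qp q a (n + k) * qp q b (n + k))) *
          qp q z (n - k) * (qp q q (n - 1 - k))⁻¹)) =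
      (q * c / (a * b * z)) ^ n - z ^ n +
      ∑ k ∈ range n, (qp q a k * qp q (q * a / c) k / (qp q (q * a / b) k * qp q q k) *
          (q * c / (a * b * z)) ^ k *
        ((qp q (a * z) (n + k) / qp q a (n + k)) *
          (qp q (c / a) (n - k) * qp q (q / (a * z)) (n - k) / qp q (b / a) (n - k)) *
          (qp q q (n - 1 - k))⁻¹)) +
      ∑ k ∈ range n, (qp q b k * qp q (q * b / c) k / (qp q (q * b / a) k * qp q q k) *
          (q * c / (a * b * z)) ^ k *
        ((qp q (b * z) (n + k) / qp q b (n + k)) *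
          (qp q (c / b) (n - k) * qp q (q / (b * z)) (n - k) / qp q (a / b) (n - k)) *
          (qp q q (n - 1 - k))⁻¹)) := by
  have hinv : ∀ y : ℂ, y ≠ 0 → Function.Injective fun k : ℕ => (y * q ^ k)⁻¹ :=
    fun y hy i j h => hinj (mul_left_cancel₀ hy (inv_injective h))
  have hpow : ∀ y : ℂ, y ≠ 0 → (∀ n : ℕ, y * q ^ n ≠ 1) → ∀ i j : ℕ, q ^ i ≠ (y * q ^ j)⁻¹ := by
    intro y hy h i j e
    apply h (i + j)
    rw [pow_add, e]
    field_simp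
  have key := sum_residues (numer q c z n) n (natDegree_numer q c z n) (fun k => q ^ k)
    (fun k => (a * q ^ k)⁻¹) (fun k => (b * q ^ k)⁻¹) hinj (hinv a ha) (hinv b hb)
    (fun i => by simp [hq]) (fun i => by simp [ha, hq]) (fun i => by simp [hb, hq])
    (hpow a ha ha1) (hpow b hb hb1) (fun i j h => hab i j (inv_injective h))
  have hKa : ∏ j ∈ range n, (-(a * q ^ j)) ≠ 0 := prod_ne_zero_iff.mpr fun j _ => by simp [ha, hq]
  have hKb : ∏ j ∈ range n, (-(b * q ^ j)) ≠ 0 := prod_ne_zero_iff.mpr fun j _ => by simp [hb, hq]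
  have e1 : (numer q c z n).coeff (n * 3) = ((∏ j ∈ range n, (-(a * q ^ j))) *
      ∏ j ∈ range n, (-(b * q ^ j))) * (q * c / (a * b * z)) ^ n := by
    have hp : (q * c / (a * b * z)) ^ n = ∏ _j ∈ range n, (q * c / (a * b * z)) := by
      rw [prod_const, card_range]
    rw [coeff_numer, hp, ← prod_mul_distrib, ← prod_mul_distrib]
    refine prod_congr rfl fun j _ => ?_
    field_simp
  have e2 : (numer q c z n).eval 0 /
      ∏ j ∈ range n, ((-q ^ j) * (-(a * q ^ j)⁻¹) * (-(b * q ^ j)⁻¹)) =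
      ((∏ j ∈ range n, (-(a * q ^ j))) * ∏ j ∈ range n, (-(b * q ^ j))) * z ^ n := by
    have hp : z ^ n = ∏ _j ∈ range n, z := by simp
    unfold numer
    rw [eval_prod, hp, ← prod_mul_distrib, ← prod_mul_distrib, ← prod_div_distrib]
    refine prod_congr rfl fun j _ => ?_
    simp only [eval_mul, eval_sub, eval_one, eval_C, eval_X]
    field_simp
    ring
  rw [e1, e2,
    sum_congr rfl fun k hk => residue_pow q a b c z hq ha hb hz ha1 hb1 hc n k (mem_range.mp hk),
    sum_congr rfl fun k hk => residue_inv q a b c z hq ha hb hc0 hz ha1 n k (mem_range.mp hk)] at key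
  have e3 : ∀ k ∈ range n, (numer q c z n).eval ((b * q ^ k)⁻¹) /
      ((b * q ^ k)⁻¹ * (∏ j ∈ (range n).erase k, ((b * q ^ k)⁻¹ - (b * q ^ j)⁻¹)) *
        (∏ j ∈ range n, ((b * q ^ k)⁻¹ - q ^ j)) *
        ∏ j ∈ range n, ((b * q ^ k)⁻¹ - (a * q ^ j)⁻¹)) = _ :=
    fun k hk => residue_inv q b a c z hq hb ha hc0 hz hb1 n k (mem_range.mp hk)
  rw [sum_congr rfl e3, ← mul_sum, ← mul_sum, ← mul_sum, mul_comm b a,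
    mul_comm (∏ j ∈ range n, (-(b * q ^ j))) (∏ j ∈ range n, (-(a * q ^ j)))] at key
  have hK := mul_ne_zero hKa hKb
  apply mul_left_cancel₀ hK
  linear_combination -key

/-- Mimachi's three-term transformation for `₂φ₁`:
`(z,q/z;q)_∞ ₂φ₁(a,b;c;q,z)
  = (az,q/(az);q)_∞ ((c/a,b;q)_∞/(c,b/a;q)_∞) ₂φ₁(a,qa/c;qa/b;q,qc/(abz))
  + (bz,q/(bz);q)_∞ ((c/b,a;q)_∞/(c,a/b;q)_∞) ₂φ₁(b,qb/c;qb/a;q,qc/(abz))`. -/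
theorem stmt8 (q : ℝ) (hq0 : 0 < q) (hq1 : q < 1) (a b c z : ℂ)
    (ha : a ≠ 0) (hb : b ≠ 0) (hc0 : c ≠ 0)
    (hz1 : ‖(q : ℂ) * c / (a * b)‖ < ‖z‖) (hz2 : ‖z‖ < 1)
    (hab : ∀ k : ℤ, a / b ≠ (q : ℂ) ^ k)
    (hdisj : ∀ m n : ℕ,
      (q : ℂ) ^ m ≠ a⁻¹ * ((q : ℂ) ^ n)⁻¹ ∧ (q : ℂ) ^ m ≠ b⁻¹ * ((q : ℂ) ^ n)⁻¹)
    (hc : ∀ n : ℕ, c * (q : ℂ) ^ n ≠ 1)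
    (hqab : ∀ n : ℕ, (q : ℂ) * a / b * (q : ℂ) ^ n ≠ 1)
    (hqba : ∀ n : ℕ, (q : ℂ) * b / a * (q : ℂ) ^ n ≠ 1) :
    qpi (q : ℂ) z * qpi (q : ℂ) ((q : ℂ) / z) * phi21 (q : ℂ) a b c z =
      qpi (q : ℂ) (a * z) * qpi (q : ℂ) ((q : ℂ) / (a * z)) *
          (qpi (q : ℂ) (c / a) * qpi (q : ℂ) b / (qpi (q : ℂ) c * qpi (q : ℂ) (b / a))) *
          phi21 (q : ℂ) a ((q : ℂ) * a / c) ((q : ℂ) * a / b) ((q : ℂ) * c / (a * b * z)) +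
        qpi (q : ℂ) (b * z) * qpi (q : ℂ) ((q : ℂ) / (b * z)) *
          (qpi (q : ℂ) (c / b) * qpi (q : ℂ) a / (qpi (q : ℂ) c * qpi (q : ℂ) (a / b))) *
          phi21 (q : ℂ) b ((q : ℂ) * b / c) ((q : ℂ) * b / a) ((q : ℂ) * c / (a * b * z)) := by
  have hq : (q : ℂ) ≠ 0 := by exact_mod_cast hq0.ne'
  have hqn : ‖(q : ℂ)‖ < 1 := by
    rw [Complex.norm_real, Real.norm_of_nonneg hq0.le]; exact hq1
  have hinj : Function.Injective fun k : ℕ => (q : ℂ) ^ k := by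
    intro i j h
    replace h : (q : ℂ) ^ i = (q : ℂ) ^ j := h
    have h' : q ^ i = q ^ j := by exact_mod_cast h
    exact pow_right_injective₀ hq0 hq1.ne h'
  have hz : z ≠ 0 := by
    rintro rfl
    rw [norm_zero] at hz1
    exact absurd hz1 (not_lt.mpr (norm_nonneg _))
  have ha1 : ∀ n : ℕ, a * (q : ℂ) ^ n ≠ 1 := fun n h => (hdisj 0 n).1 (by
    rw [pow_zero, ← mul_inv, h, inv_one])
  have hb1 : ∀ n : ℕ, b * (q : ℂ) ^ n ≠ 1 := fun n h => (hdisj 0 n).2 (by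
    rw [pow_zero, ← mul_inv, h, inv_one])
  have hqq : ∀ n : ℕ, (q : ℂ) * (q : ℂ) ^ n ≠ 1 := fun n h => by
    rw [← pow_succ'] at h
    exact absurd (hinj (h.trans (pow_zero _).symm)) (Nat.succ_ne_zero n)
  have hab' : ∀ i j : ℕ, a * (q : ℂ) ^ i ≠ b * (q : ℂ) ^ j := fun i j h => hab (j - i) (by
    rw [zpow_sub₀ hq, zpow_natCast, zpow_natCast]
    field_simp
    linear_combination h)
  have hba1 : ∀ n : ℕ, b / a * (q : ℂ) ^ n ≠ 1 := fun n h => hab' 0 n (by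
    field_simp at h; rw [h]; ring)
  have hab1 : ∀ n : ℕ, a / b * (q : ℂ) ^ n ≠ 1 := fun n h => hab' n 0 (by
    field_simp at h; rw [h]; ring)
  have hw : ‖(q : ℂ) * c / (a * b * z)‖ < 1 := by
    rw [← div_div, norm_div, div_lt_one (norm_pos_iff.mpr hz)]
    exact hz1
  have T := fun x => tendsto_qp hqn x
  have ne_a := qpi_ne_zero hqn ha1
  have ne_b := qpi_ne_zero hqn hb1
  have ne_c := qpi_ne_zero hqn hc
  have ne_q := qpi_ne_zero hqn hqq
  have ne_ab := qpi_ne_zero hqn hab1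
  have ne_ba := qpi_ne_zero hqn hba1
  have l1 := tannery_shifted (summable_phi21 hqn a b hz2 hc hqq)
    (((T (q / z)).mul (T c)).div ((T a).mul (T b)) (mul_ne_zero ne_a ne_b)) (T z)
    ((T q).inv₀ ne_q)
  have l2 := tannery_shifted (summable_phi21 hqn a (q * a / c) hw hqab hqq)
    ((T (a * z)).div (T a) ne_a) (((T (c / a)).mul (T (q / (a * z)))).div (T (b / a)) ne_ba)
    ((T q).inv₀ ne_q)
  have l3 := tannery_shifted (summable_phi21 hqn b (q * b / c) hw hqba hqq)
    ((T (b * z)).div (T b) ne_b) (((T (c / b)).mul (T (q / (b * z)))).div (T (a / b)) ne_ab)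
    ((T q).inv₀ ne_q)
  have lz := tendsto_pow_atTop_nhds_zero_of_norm_lt_one hz2
  have lw := tendsto_pow_atTop_nhds_zero_of_norm_lt_one hw
  have lim := tendsto_nhds_unique l1 ((((lw.sub lz).add l2).add l3).congr fun n =>
    (truncated (q : ℂ) a b c z hq hinj ha hb hc0 hz ha1 hb1 hc hab' n).symm)
  change phi21 _ _ _ _ _ * _ = 0 - 0 + phi21 _ _ _ _ _ * _ + phi21 _ _ _ _ _ * _ at lim
  generalize phi21 (q : ℂ) a b c z = F1 at *
  generalize phi21 (q : ℂ) a _ _ _ = F2 at *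
  generalize phi21 (q : ℂ) b _ _ _ = F3 at *
  field_simp at lim ⊢
  linear_combination lim
end
end

section
/- (q-Saalschütz summation) Let 0<q<1, n∈ℤ_{≥0}, and a,b,c∈ℂ with ab≠0, c ∉ {1,q^{-1},…,q^{-n+1}} and ab q^{1-n}/c ∉ {1,q^{-1},…,q^{-n+1}}. Then ₃φ₂(a, b, q^{-n}; c, ab c^{-1} q^{1-n}; q, q) = (c/a, c/b;q)_n / (c, c/(ab);q)_n. -/
/-!
With `e = c / (a b)`, reversing the two products that depend on `q^{-n}` and multiplying through by
`(c, e; q)_n` turns the summation into the denominator-free identity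
`∑ₖ [n choose k]_q (a)ₖ (b)ₖ (c qᵏ)ₙ₋ₖ eᵏ (e)ₙ₋ₖ = (e a)ₙ (e b)ₙ`, where `c = e a b`
(`sum_saalTerm`).

Writing `T(n,k)` for the summand, this follows by induction on `n` from a Wilf–Zeilberger style
certificate: with `H(n,k) = -q^{n-k} e (1 - a qᵏ)(1 - b qᵏ) T(n,k)`,
`T(n+1,k) - (1 - e a qⁿ)(1 - e b qⁿ) T(n,k) = H(n,k) - H(n,k-1)`,
so that summing over `k` gives a first-order recurrence in `n` (`sum_saalTerm_partial`). The
reversal of products is `qp_reverse`.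
-/

noncomputable section

/-- The basic hypergeometric series `₃φ₂(a₁,a₂,a₃;b₁,b₂;q,z)`. -/
def phi32 (q a1 a2 a3 b1 b2 z : ℂ) : ℂ :=
  ∑' k : ℕ, qp q a1 k * qp q a2 k * qp q a3 k / (qp q b1 k * qp q b2 k * qp q q k) * z ^ k

lemma qp_succ (q a : ℂ) (k : ℕ) : qp q a (k + 1) = qp q a k * (1 - a * q ^ k) := by
  simp [qp, Finset.prod_range_succ]

lemma qp_zero (q a : ℂ) : qp q a 0 = 1 := by simp [qp]

lemma qp_succ_left (q a : ℂ) (k : ℕ) : qp q a (k + 1) = (1 - a) * qp q (a * q) k := by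
  simp only [qp, Finset.prod_range_succ', pow_zero, mul_one]
  rw [mul_comm]
  congr 1
  refine Finset.prod_congr rfl fun j _ => ?_
  ring

lemma qp_add (q a : ℂ) (k m : ℕ) : qp q a (k + m) = qp q a k * qp q (a * q ^ k) m := by
  simp only [qp, Finset.prod_range_add]
  congr 1
  refine Finset.prod_congr rfl fun j _ => ?_
  ring

lemma qp_ne_zero_s14 {q a : ℂ} {k : ℕ} (h : ∀ j < k, a * q ^ j ≠ 1) : qp q a k ≠ 0 := by
  rw [qp, Finset.prod_ne_zero_iff]
  intro j hj
  exact sub_ne_zero.2 (h j (Finset.mem_range.1 hj)).symm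

/-- The summand `T(k+m,k) = [k+m choose k]_q (a)ₖ (b)ₖ (c qᵏ)ₘ eᵏ (e)ₘ` with `c = e a b`; the
arguments are `k` and `m = n - k`, so that no natural-number subtraction occurs. -/
def saalTerm (q a b e : ℂ) (k m : ℕ) : ℂ :=
  qp q q (k + m) / (qp q q k * qp q q m) * qp q a k * qp q b k *
    qp q (e * a * b * q ^ k) m * e ^ k * qp q e m

/-- The certificate identity summed over `k ≤ j`, where `n = j + m`; the last summand is the
telescoped boundary term `H(n,j)`. -/
lemma sum_saalTerm_partial (q a b e : ℂ) (hq : ∀ k, qp q q k ≠ 0) (j m : ℕ) :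
    ∑ k ∈ Finset.range (j + 1), saalTerm q a b e k (j + m + 1 - k) =
      (1 - e * a * q ^ (j + m)) * (1 - e * b * q ^ (j + m)) *
        ∑ k ∈ Finset.range (j + 1), saalTerm q a b e k (j + m - k)
      - q ^ m * e * (1 - a * q ^ j) * (1 - b * q ^ j) * saalTerm q a b e j m := by
  induction j generalizing m with
  | zero =>
    have h1 := hq m
    have h2 := hq (m + 1)
    simp only [zero_add, Finset.sum_range_one, Nat.sub_zero, saalTerm, qp_zero, pow_zero, one_mul,
      mul_one, div_self h1, div_self h2]
    rw [qp_succ, qp_succ]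
    ring
  | succ j ih =>
    have ih' := ih (m + 1)
    rw [Finset.sum_range_succ, Finset.sum_range_succ _ (j + 1)]
    have e1 : j + 1 + m = j + (m + 1) := by ring
    have e2 : j + (m + 1) + 1 - (j + 1) = m + 1 := by omega
    have e3 : j + (m + 1) - (j + 1) = m := by omega
    rw [e1, ih', e2, e3, mul_add]
    have key : saalTerm q a b e (j + 1) (m + 1) =
        (1 - e * a * q ^ (j + (m + 1))) * (1 - e * b * q ^ (j + (m + 1))) *
          saalTerm q a b e (j + 1) m
        + q ^ (m + 1) * e * (1 - a * q ^ j) * (1 - b * q ^ j) * saalTerm q a b e j (m + 1)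
        - q ^ m * e * (1 - a * q ^ (j + 1)) * (1 - b * q ^ (j + 1)) *
          saalTerm q a b e (j + 1) m := by
      have hj := hq j
      have hm := hq m
      have hj1 := hq (j + 1)
      have hm1 := hq (m + 1)
      have f1 : j + 1 + (m + 1) = j + m + 1 + 1 := by ring
      have f2 : j + 1 + m = j + m + 1 := by ring
      have f3 : j + (m + 1) = j + m + 1 := by ring
      have g1 := qp_succ_left q (e * a * b * q ^ j) m
      rw [mul_assoc (e * a * b), ← pow_succ] at g1
      have g2 := qp_succ q (e * a * b * q ^ (j + 1)) m
      simp only [saalTerm]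
      rw [f1, f2, f3, g1, g2, qp_succ q q (j + m + 1), qp_succ q a, qp_succ q b, qp_succ q e]
      rw [qp_succ] at hj1 hm1
      rw [qp_succ q q j, qp_succ q q m]
      have hj2 := right_ne_zero_of_mul hj1
      have hm2 := right_ne_zero_of_mul hm1
      generalize qp q (e * a * b * q ^ (j + 1)) m = C
      generalize qp q q (j + m + 1) = Q
      generalize qp q a j = A
      generalize qp q b j = B
      generalize qp q e m = E
      generalize qp q q j = Qj at *
      generalize qp q q m = Qm at *
      simp only [pow_succ, pow_add] at *
      generalize q ^ j = x at *
      generalize q ^ m = y at *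
      field_simp
      ring
    rw [key]
    ring

/-- The polynomial form of the q-Saalschütz summation, with `c = e a b`. -/
lemma sum_saalTerm (q a b e : ℂ) (hq : ∀ k, qp q q k ≠ 0) (n : ℕ) :
    ∑ k ∈ Finset.range (n + 1), saalTerm q a b e k (n - k) = qp q (e * a) n * qp q (e * b) n := by
  induction n with
  | zero => simp [saalTerm, qp_zero]
  | succ n ih =>
    have h := sum_saalTerm_partial q a b e hq n 0
    simp only [add_zero] at h
    rw [Finset.sum_range_succ, h, ih, Nat.sub_self]
    simp only [saalTerm, add_zero, qp_zero, mul_one, div_self (hq _)]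
    simp only [qp_succ]
    ring

/-- Reversal of a q-shifted factorial. The last factor on the left is independent of `y`, so it
cancels when the formula is used for `y = q` and `y = c / (a b)` together. -/
lemma qp_reverse (q y : ℂ) (hq : q ≠ 0) (hy : y ≠ 0) (n k m : ℕ) (h : n = k + m) :
    qp q (y⁻¹ * q ^ ((1 : ℤ) - (n : ℤ))) k * y ^ k * qp q y m *
      ∏ j ∈ Finset.range k, (-(q ^ (n - 1 - j))) = qp q y n := by
  induction k generalizing m with
  | zero => simp [qp_zero, h]
  | succ k ih =>
    rw [← ih (m + 1) (by omega), qp_succ, Finset.prod_range_succ, qp_succ q y]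
    have e1 : n - 1 - k = m := by omega
    have e2 : q ^ ((1 : ℤ) - (n : ℤ)) * q ^ k * q ^ m = 1 := by
      rw [← zpow_natCast, ← zpow_natCast, ← zpow_add₀ hq, ← zpow_add₀ hq, h]
      push_cast
      rw [show (1 : ℤ) - (k + 1 + m) + k + m = 0 by ring, zpow_zero]
    have e3 : (1 - y⁻¹ * q ^ ((1 : ℤ) - (n : ℤ)) * q ^ k) * y * (-(q ^ m)) = 1 - y * q ^ m := by
      have : y⁻¹ * y = 1 := inv_mul_cancel₀ hy
      linear_combination (q ^ ((1 : ℤ) - (n : ℤ)) * q ^ k * q ^ m) * this + e2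
    rw [e1, ← e3]
    ring

/-- The q-Saalschütz summation:
`₃φ₂(a,b,q^{-n}; c, ab c^{-1} q^{1-n}; q, q) = (c/a,c/b;q)_n / (c,c/(ab);q)_n`
for `0<q<1`, `ab ≠ 0`, `c ≠ 0`, and the lower parameters avoiding
`{1, q^{-1}, …, q^{-n+1}}`. -/
theorem stmt14 (q : ℝ) (hq0 : 0 < q) (hq1 : q < 1) (n : ℕ) (a b c : ℂ)
    (hab : a * b ≠ 0) (hc0 : c ≠ 0)
    (hc : ∀ j : ℕ, j < n → c * (q : ℂ) ^ j ≠ 1)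
    (hd : ∀ j : ℕ, j < n → a * b * c⁻¹ * (q : ℂ) ^ ((1 : ℤ) - (n : ℤ)) * (q : ℂ) ^ j ≠ 1) :
    phi32 (q : ℂ) a b (((q : ℂ) ^ n)⁻¹) c
        (a * b * c⁻¹ * (q : ℂ) ^ ((1 : ℤ) - (n : ℤ))) (q : ℂ) =
      qp (q : ℂ) (c / a) n * qp (q : ℂ) (c / b) n /
        (qp (q : ℂ) c n * qp (q : ℂ) (c / (a * b)) n) := by
  have hq : (q : ℂ) ≠ 0 := by exact_mod_cast hq0.ne'
  have hqq : ∀ k, qp (q : ℂ) q k ≠ 0 := by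
    intro k
    refine qp_ne_zero_s14 fun j _ hj => ?_
    rw [← pow_succ'] at hj
    have h1 : q ^ (j + 1) = 1 := by exact_mod_cast hj
    exact (pow_lt_one₀ hq0.le hq1 (Nat.succ_ne_zero j)).ne h1
  have ha := left_ne_zero_of_mul hab
  have hb := right_ne_zero_of_mul hab
  generalize (q : ℂ) = q at *
  obtain ⟨e, he⟩ : ∃ e, e = c / (a * b) := ⟨_, rfl⟩
  have he0 : e ≠ 0 := by rw [he]; exact div_ne_zero hc0 hab
  have hce : c = e * a * b := by rw [he]; field_simp
  have hei : a * b * c⁻¹ = e⁻¹ := by rw [he]; field_simp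
  have hca : c / a = e * b := by rw [hce]; field_simp
  have hcb : c / b = e * a := by rw [hce]; field_simp
  have hqi : (q ^ n)⁻¹ = q⁻¹ * q ^ ((1 : ℤ) - (n : ℤ)) := by
    rw [zpow_sub₀ hq, zpow_one, zpow_natCast]
    field_simp
  rw [← he, hca, hcb, hei, hqi]
  rw [hei] at hd
  have hcn : qp q c n ≠ 0 := qp_ne_zero_s14 hc
  have hdk : ∀ k ≤ n, qp q (e⁻¹ * q ^ ((1 : ℤ) - (n : ℤ))) k ≠ 0 := fun k hk =>
    qp_ne_zero_s14 fun j hj => hd j (hj.trans_le hk)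
  have hw : ∀ k, ∏ j ∈ Finset.range k, (-(q ^ (n - 1 - j))) ≠ 0 := fun k =>
    Finset.prod_ne_zero_iff.2 fun j _ => neg_ne_zero.2 (pow_ne_zero _ hq)
  have hen : qp q e n ≠ 0 := by
    rw [← qp_reverse q e hq he0 n n 0 rfl, qp_zero]
    exact mul_ne_zero (mul_ne_zero (mul_ne_zero (hdk n le_rfl) (pow_ne_zero _ he0)) one_ne_zero)
      (hw n)
  rw [phi32, tsum_eq_sum (s := Finset.range (n + 1))]
  · rw [mul_comm (qp q (e * b) n), ← sum_saalTerm q a b e hqq n, Finset.sum_div]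
    refine Finset.sum_congr rfl fun k hk => ?_
    obtain ⟨m, hm⟩ := Nat.exists_eq_add_of_le (Nat.lt_succ_iff.1 (Finset.mem_range.1 hk))
    have r1 := qp_reverse q q hq hq n k m hm
    have r2 := qp_reverse q e hq he0 n k m hm
    have hck := qp_add q c k m
    rw [← hm] at hck
    have hd' := hdk k (by omega)
    have hk' := hqq k
    have hm' := hqq m
    have hmn : n - k = m := by omega
    rw [hmn, saalTerm, ← hm, ← hce, hck, ← r1, ← r2]
    rw [hck] at hcn
    rw [← r2] at hen
    have h1 := left_ne_zero_of_mul hcn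
    have h2 := right_ne_zero_of_mul hcn
    have h3 := hw k
    have h4 := right_ne_zero_of_mul (left_ne_zero_of_mul hen)
    generalize ∏ j ∈ Finset.range k, (-(q ^ (n - 1 - j))) = w at *
    generalize qp q (e⁻¹ * q ^ ((1 : ℤ) - (n : ℤ))) k = D at *
    generalize qp q (q⁻¹ * q ^ ((1 : ℤ) - (n : ℤ))) k = P at *
    generalize qp q (c * q ^ k) m = C at *
    field_simp
  · intro k hk
    have hnk : n < k := by
      rw [Finset.mem_range] at hk
      omega
    -- the factor `j = n` of `(q^{-n}; q)_k` vanishes once `k > n`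
    have h0 : qp q (q⁻¹ * q ^ ((1 : ℤ) - (n : ℤ))) k = 0 := by
      rw [← hqi, qp]
      refine Finset.prod_eq_zero (Finset.mem_range.2 hnk) ?_
      rw [inv_mul_cancel₀ (pow_ne_zero n hq), sub_self]
    rw [h0]
    simp
end
end
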